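/- For every x ∈ U, the second derivative of the mean curvature at t = 0 is ∂²H(t)/∂t² |_{t=0} = ((2 − n)/n) |∇f(x)|² + 2 (f(x) + φ'(0))² − φ''(0) + (4/n)(f(x) + φ'(0)) Δf(x). -/

import Mathlib

open MeasureTheory Real Set
open scoped RealInnerProductSpace

noncomputable section

abbrev En (n : ℕ) : Type := EuclideanSpace ℝ (Fin n)

/-- Partial derivative of `F` in the `i`-th coordinate direction. -/
def pd {m : ℕ} {E : Type} [NormedAddCommGroup E] [NormedSpace ℝ E]
    (i : Fin m) (F : En m → E) (x : En m) : E :=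
  fderiv ℝ F x (EuclideanSpace.single i 1)

/-- The induced (first fundamental form) metric of a map `Y : U → ℝ^{n+1}`. -/
def gmet {n : ℕ} (Y : En n → En (n + 1)) (x : En n) : Matrix (Fin n) (Fin n) ℝ :=
  Matrix.of fun i j => ⟪pd i Y x, pd j Y x⟫

/-- The variation `X(t,x) = (1 + t f(x) + φ(t)) Φ(x)`. -/
def Xvar {n : ℕ} (f : En n → ℝ) (φ : ℝ → ℝ) (Φ : En n → En (n + 1)) (t : ℝ) (x : En n) :
    En (n + 1) :=
  (1 + t * f x + φ t) • Φ x

/-- Second fundamental form `h_{ij} = ⟨∂X/∂x_i, ∂N/∂x_j⟩`. -/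
def sff {n : ℕ} (Y Nf : En n → En (n + 1)) (x : En n) : Matrix (Fin n) (Fin n) ℝ :=
  Matrix.of fun i j => ⟪pd i Y x, pd j Nf x⟫

/-- Mean curvature `H = (1/n) Σ g^{ij} h_{ij}`. -/
def Hmean {n : ℕ} (Y Nf : En n → En (n + 1)) (x : En n) : ℝ :=
  (1 / (n : ℝ)) * ∑ i, ∑ j, (gmet Y x)⁻¹ i j * sff Y Nf x i j

/-- The volume element `√(det g)`. -/
def vElem {n : ℕ} (Y : En n → En (n + 1)) (x : En n) : ℝ :=
  Real.sqrt (gmet Y x).det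

/-- `|∇u|² = Σ g^{ij} ∂_i u ∂_j u` with respect to the metric of `Φ`. -/
def gradSq {n : ℕ} (Φ : En n → En (n + 1)) (u : En n → ℝ) (x : En n) : ℝ :=
  ∑ i, ∑ j, (gmet Φ x)⁻¹ i j * pd i u x * pd j u x

/-- Tangential gradient `∇u = Σ g^{ij} ∂_i u ∂_j Φ ∈ ℝ^{n+1}`. -/
def gradV {n : ℕ} (Φ : En n → En (n + 1)) (u : En n → ℝ) (x : En n) : En (n + 1) :=
  ∑ i, ∑ j, ((gmet Φ x)⁻¹ i j * pd i u x) • pd j Φ x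

/-- Laplace–Beltrami operator `Δu = (1/√g) Σ ∂_i (√g g^{ij} ∂_j u)`. -/
def lapl {n : ℕ} (Φ : En n → En (n + 1)) (u : En n → ℝ) (x : En n) : ℝ :=
  (vElem Φ x)⁻¹ * ∑ i, ∑ j, pd i (fun y => vElem Φ y * (gmet Φ y)⁻¹ i j * pd j u y) x

/-- Christoffel symbols of the metric of `Φ`. -/
def christoffel {n : ℕ} (Φ : En n → En (n + 1)) (k i j : Fin n) (x : En n) : ℝ :=
  (1 / 2) * ∑ l, (gmet Φ x)⁻¹ k l *
    (pd i (fun y => gmet Φ y l j) x + pd j (fun y => gmet Φ y l i) x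
      - pd l (fun y => gmet Φ y i j) x)

/-- Hessian `(∇²u)_{ij} = ∂²u/∂x_i∂x_j − Σ_k Γ^k_{ij} ∂_k u`. -/
def hess {n : ℕ} (Φ : En n → En (n + 1)) (u : En n → ℝ) (x : En n) (i j : Fin n) : ℝ :=
  pd i (fun y => pd j u y) x - ∑ k, christoffel Φ k i j x * pd k u x

theorem ContDiffAt.pd {m : ℕ} {E : Type} [NormedAddCommGroup E] [NormedSpace ℝ E] {F : En m → E}
    {x : En m} (hF : ContDiffAt ℝ (⊤ : ℕ∞) F x) (i : Fin m) :
    ContDiffAt ℝ (⊤ : ℕ∞) (_root_.pd i F) x := by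
  unfold _root_.pd
  exact (hF.fderiv_right (m := (⊤ : ℕ∞)) (by exact_mod_cast le_top)).clm_apply contDiffAt_const

theorem ContDiffAt.differentiableAt_top {E F : Type} [NormedAddCommGroup E] [NormedSpace ℝ E]
    [NormedAddCommGroup F] [NormedSpace ℝ F] {u : E → F} {x : E}
    (hu : ContDiffAt ℝ (⊤ : ℕ∞) u x) : DifferentiableAt ℝ u x :=
  hu.differentiableAt (by simp)

section PartialDerivatives

variable {m : ℕ} {E : Type} [NormedAddCommGroup E] {x : En m}

theorem pd_congr [NormedSpace ℝ E] {F G : En m → E} (h : F =ᶠ[nhds x] G) (i : Fin m) :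
    pd i F x = pd i G x := by
  simp only [pd, h.fderiv_eq]

theorem pd_comm [NormedSpace ℝ E] {F : En m → E} (hF : ContDiffAt ℝ (⊤ : ℕ∞) F x) (i j : Fin m) :
    pd i (pd j F) x = pd j (pd i F) x := by
  have hd : DifferentiableAt ℝ (fderiv ℝ F) x :=
    (hF.fderiv_right (m := (⊤ : ℕ∞)) (by exact_mod_cast le_top)).differentiableAt_top
  have hs : IsSymmSndFDerivAt ℝ F x := hF.isSymmSndFDerivAt (by
    simpa using WithTop.coe_le_coe.mpr (le_top : (2 : ℕ∞) ≤ ⊤))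
  have key : ∀ k l : Fin m, pd k (pd l F) x =
      fderiv ℝ (fderiv ℝ F) x (EuclideanSpace.single k 1) (EuclideanSpace.single l 1) := by
    intro k l
    unfold pd
    rw [fderiv_clm_apply hd (differentiableAt_const _)]
    simp
  rw [key, key, hs.eq]

theorem pd_add [NormedSpace ℝ E] {F G : En m → E} (hF : DifferentiableAt ℝ F x)
    (hG : DifferentiableAt ℝ G x) (i : Fin m) :
    pd i (fun y => F y + G y) x = pd i F x + pd i G x := by
  simp [pd, fderiv_fun_add hF hG]

theorem pd_smul [NormedSpace ℝ E] {u : En m → ℝ} {F : En m → E} (hu : DifferentiableAt ℝ u x)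
    (hF : DifferentiableAt ℝ F x) (i : Fin m) :
    pd i (fun y => u y • F y) x = u x • pd i F x + pd i u x • F x := by
  simp [pd, fderiv_fun_smul hu hF]

theorem pd_mul {u v : En m → ℝ} (hu : DifferentiableAt ℝ u x) (hv : DifferentiableAt ℝ v x)
    (i : Fin m) : pd i (fun y => u y * v y) x = u x * pd i v x + pd i u x * v x :=
  pd_smul hu hv i

theorem pd_const_mul {u : En m → ℝ} (hu : DifferentiableAt ℝ u x) (c : ℝ) (i : Fin m) :
    pd i (fun y => c * u y) x = c * pd i u x := by
  simp [pd, fderiv_const_mul hu]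

theorem pd_inner [InnerProductSpace ℝ E] {F G : En m → E} (hF : DifferentiableAt ℝ F x)
    (hG : DifferentiableAt ℝ G x) (i : Fin m) :
    pd i (fun y => ⟪F y, G y⟫) x = ⟪F x, pd i G x⟫ + ⟪pd i F x, G x⟫ := by
  simp [pd, fderiv_inner_apply ℝ hF hG]

end PartialDerivatives

section MatrixCalculus

variable {n : ℕ} {E : Type} [NormedAddCommGroup E] [NormedSpace ℝ E]
  {M : E → Matrix (Fin n) (Fin n) ℝ} {x : E}

/-- Jacobi's formula for the derivative of a determinant. -/
theorem hasFDerivAt_det {M' : Fin n → Fin n → E →L[ℝ] ℝ}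
    (hM : ∀ i j, HasFDerivAt (fun y => M y i j) (M' i j) x) :
    HasFDerivAt (fun y => (M y).det) (∑ i, ∑ k, (M x).adjugate i k • M' k i) x := by
  have h : HasFDerivAt (fun y => (M y).det) (∑ σ : Equiv.Perm (Fin n),
      ((σ.sign : ℤ) : ℝ) • ∑ i, (∏ j ∈ Finset.univ.erase i, M x (σ j) j) • M' (σ i) i) x := by
    simp only [Matrix.det_apply']
    exact HasFDerivAt.fun_sum fun σ _ =>
      (HasFDerivAt.finsetProd fun i _ => hM (σ i) i).const_mul _
  refine h.congr_fderiv ?_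
  ext v
  have key : ∀ i, ∑ k, (M x).adjugate i k * M' k i v =
      ∑ σ : Equiv.Perm (Fin n), ((σ.sign : ℤ) : ℝ) *
        ((∏ j ∈ Finset.univ.erase i, M x (σ j) j) * M' (σ i) i v) := by
    intro i
    have : ∑ k, (M x).adjugate i k * M' k i v = ((M x).updateCol i fun k => M' k i v).det := by
      rw [← Matrix.cramer_apply, Matrix.cramer_eq_adjugate_mulVec]
      rfl
    rw [this, Matrix.det_apply']
    refine Finset.sum_congr rfl fun σ _ => ?_
    rw [← Finset.prod_erase_mul _ _ (Finset.mem_univ i)]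
    congr 2
    · refine Finset.prod_congr rfl fun j hj => ?_
      rw [Matrix.updateCol_ne (Finset.ne_of_mem_erase hj)]
    · rw [Matrix.updateCol_self]
  simp only [sum_apply, smul_apply, smul_eq_mul, key,
    Finset.mul_sum]
  exact Finset.sum_comm

theorem differentiableAt_det (hM : ∀ i j, DifferentiableAt ℝ (fun y => M y i j) x) :
    DifferentiableAt ℝ (fun y => (M y).det) x :=
  (hasFDerivAt_det fun i j => (hM i j).hasFDerivAt).differentiableAt

theorem differentiableAt_matrix_inv (hM : ∀ i j, DifferentiableAt ℝ (fun y => M y i j) x)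
    (hx : (M x).det ≠ 0) (i j : Fin n) : DifferentiableAt ℝ (fun y => (M y)⁻¹ i j) x := by
  have hadj : DifferentiableAt ℝ (fun y => (M y).adjugate i j) x := by
    simp only [Matrix.adjugate_apply]
    refine differentiableAt_det fun k l => ?_
    by_cases hk : k = j
    · subst hk
      simp
    · simpa [Matrix.updateRow_ne hk] using hM k l
  simp only [Matrix.inv_def, Matrix.smul_apply, Ring.inverse_eq_inv', smul_eq_mul]
  exact ((differentiableAt_det hM).inv hx).mul hadj

/-- The derivative of the inverse matrix, in coordinates. -/
theorem fderiv_matrix_inv_apply (hM : ∀ i j, DifferentiableAt ℝ (fun y => M y i j) x)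
    (hx : (M x).det ≠ 0) (i j : Fin n) (v : E) :
    fderiv ℝ (fun y => (M y)⁻¹ i j) x v =
      -∑ k, ∑ l, (M x)⁻¹ i k * fderiv ℝ (fun y => M y k l) x v * (M x)⁻¹ l j := by
  have hI := differentiableAt_matrix_inv hM hx
  have hdet : ∀ᶠ y in nhds x, (M y).det ≠ 0 :=
    (differentiableAt_det hM).continuousAt.eventually_ne hx
  have hprod : Matrix.of (fun i l => fderiv ℝ (fun y => (M y)⁻¹ i l) x v) * M x =
      -((M x)⁻¹ * Matrix.of fun l j => fderiv ℝ (fun y => M y l j) x v) := by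
    ext i j
    have h1 : HasFDerivAt (fun y => ∑ l, (M y)⁻¹ i l * M y l j) _ x :=
      HasFDerivAt.fun_sum fun l _ => (hI i l).hasFDerivAt.mul (hM l j).hasFDerivAt
    have h2 : (fun y => ∑ l, (M y)⁻¹ i l * M y l j) =ᶠ[nhds x]
        fun _ => (1 : Matrix (Fin n) (Fin n) ℝ) i j := by
      filter_upwards [hdet] with y hy
      rw [← Matrix.mul_apply, Matrix.nonsing_inv_mul _ (isUnit_iff_ne_zero.mpr hy)]
    have h3 := congrArg (fun L : E →L[ℝ] ℝ => L v)
      (h1.fderiv.symm.trans (h2.fderiv_eq.trans (fderiv_const_apply _)))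
    simp only [sum_apply, add_apply,
      smul_apply, smul_eq_mul, zero_apply,
      Finset.sum_add_distrib] at h3
    simp only [Matrix.mul_apply, Matrix.of_apply, Matrix.neg_apply]
    rw [eq_neg_iff_add_eq_zero, ← h3, add_comm]
    congr 1
    exact Finset.sum_congr rfl fun l _ => mul_comm _ _
  have h4 : Matrix.of (fun i l => fderiv ℝ (fun y => (M y)⁻¹ i l) x v) =
      -((M x)⁻¹ * (Matrix.of fun l j => fderiv ℝ (fun y => M y l j) x v) * (M x)⁻¹) := by
    rw [← Matrix.neg_mul, ← hprod, Matrix.mul_assoc,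
      Matrix.mul_nonsing_inv _ (isUnit_iff_ne_zero.mpr hx), Matrix.mul_one]
  have h5 := congrFun (congrFun h4 i) j
  rw [Matrix.of_apply] at h5
  rw [h5, Matrix.neg_apply, Matrix.mul_apply]
  simp only [Matrix.mul_apply, Matrix.of_apply, Finset.sum_mul]
  rw [Finset.sum_comm]

end MatrixCalculus

section InducedMetric

variable {n : ℕ} {Φ : En n → En (n + 1)} {f : En n → ℝ} {x : En n}

theorem gmet_inv_symm (i j : Fin n) : (gmet Φ x)⁻¹ i j = (gmet Φ x)⁻¹ j i := by
  have h : (gmet Φ x).transpose = gmet Φ x := by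
    ext i j
    simp [gmet, real_inner_comm]
  have h' := congrFun (congrFun (Matrix.transpose_nonsing_inv (gmet Φ x)) j) i
  rwa [h, Matrix.transpose_apply] at h'

theorem differentiableAt_gmet (hΦ : ContDiffAt ℝ (⊤ : ℕ∞) Φ x) (k l : Fin n) :
    DifferentiableAt ℝ (fun y => gmet Φ y k l) x :=
  (hΦ.pd k).differentiableAt_top.inner ℝ (hΦ.pd l).differentiableAt_top

theorem pd_gmet (hΦ : ContDiffAt ℝ (⊤ : ℕ∞) Φ x) (i k l : Fin n) :
    pd i (fun y => gmet Φ y k l) x =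
      ⟪pd i (pd l Φ) x, pd k Φ x⟫ + ⟪pd i (pd k Φ) x, pd l Φ x⟫ := by
  rw [real_inner_comm (pd k Φ x)]
  exact pd_inner (hΦ.pd k).differentiableAt_top (hΦ.pd l).differentiableAt_top i

theorem pd_gmet_inv (hΦ : ContDiffAt ℝ (⊤ : ℕ∞) Φ x) (hg : (gmet Φ x).PosDef) (i j m : Fin n) :
    pd m (fun y => (gmet Φ y)⁻¹ i j) x =
      -∑ k, ∑ l, (gmet Φ x)⁻¹ i k *
        (⟪pd m (pd l Φ) x, pd k Φ x⟫ + ⟪pd m (pd k Φ) x, pd l Φ x⟫) * (gmet Φ x)⁻¹ l j := by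
  simp only [← pd_gmet hΦ]
  exact fderiv_matrix_inv_apply (differentiableAt_gmet hΦ) hg.det_pos.ne' i j _

theorem differentiableAt_vElem (hΦ : ContDiffAt ℝ (⊤ : ℕ∞) Φ x) (hg : (gmet Φ x).PosDef) :
    DifferentiableAt ℝ (vElem Φ) x :=
  (differentiableAt_det (differentiableAt_gmet hΦ)).sqrt hg.det_pos.ne'

theorem vElem_pos (hg : (gmet Φ x).PosDef) : 0 < vElem Φ x := Real.sqrt_pos.mpr hg.det_pos

theorem pd_vElem (hΦ : ContDiffAt ℝ (⊤ : ℕ∞) Φ x) (hg : (gmet Φ x).PosDef) (i : Fin n) :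
    pd i (vElem Φ) x =
      vElem Φ x * ∑ k, ∑ l, (gmet Φ x)⁻¹ k l * ⟪pd i (pd k Φ) x, pd l Φ x⟫ := by
  have hd : (gmet Φ x).det ≠ 0 := hg.det_pos.ne'
  have h := (hasFDerivAt_det fun k l => (differentiableAt_gmet hΦ k l).hasFDerivAt).sqrt hd
  have hadj : ∀ k l, (gmet Φ x).adjugate k l = (gmet Φ x).det * (gmet Φ x)⁻¹ k l := by
    intro k l
    rw [Matrix.inv_def, Matrix.smul_apply, Ring.inverse_eq_inv', smul_eq_mul,
      mul_inv_cancel_left₀ hd]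
  have hv : pd i (vElem Φ) x = 1 / (2 * vElem Φ x) *
      ∑ k, ∑ l, (gmet Φ x).adjugate k l * pd i (fun y => gmet Φ y l k) x := by
    unfold pd vElem
    rw [h.fderiv]
    simp [sum_apply]
  have hsum : ∑ k, ∑ l, (gmet Φ x)⁻¹ k l * ⟪pd i (pd l Φ) x, pd k Φ x⟫ =
      ∑ k, ∑ l, (gmet Φ x)⁻¹ k l * ⟪pd i (pd k Φ) x, pd l Φ x⟫ := by
    rw [Finset.sum_comm]
    refine Finset.sum_congr rfl fun k _ => Finset.sum_congr rfl fun l _ => ?_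
    rw [gmet_inv_symm]
  have hsq : (gmet Φ x).det = vElem Φ x * vElem Φ x := (Real.mul_self_sqrt hg.det_pos.le).symm
  have hne := (vElem_pos hg).ne'
  simp only [hv, hadj, pd_gmet hΦ, mul_assoc, ← Finset.mul_sum, mul_add, Finset.sum_add_distrib,
    hsum]
  rw [hsq]
  field_simp
  ring

/-- The cancellation of first order terms in the Laplace–Beltrami operator. -/
theorem sum_christoffel_terms {A : Fin n → Fin n → ℝ} {S : Fin n → Fin n → Fin n → ℝ}
    (hA : ∀ i j, A i j = A j i) (hS : ∀ i k l, S i k l = S k i l) (u : Fin n → ℝ) :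
    ∑ i, ∑ j, ((∑ k, ∑ l, A k l * S i k l) * A i j * u j
        + (-∑ k, ∑ l, A i k * (S i l k + S i k l) * A l j) * u j)
      = -∑ i, ∑ j, A i j * ∑ k, ∑ l, A k l * u k * S i j l := by
  have h1 : ∑ i, ∑ j, (∑ k, ∑ l, A k l * S i k l) * A i j * u j =
      ∑ i, ∑ j, (∑ k, ∑ l, A i k * S i l k * A l j) * u j := by
    simp only [Finset.sum_mul]
    calc _ = ∑ i, ∑ j, ∑ k, ∑ l, A k l * S i k l * A i j * u j := rfl
      _ = ∑ i, ∑ k, ∑ j, ∑ l, A k l * S i k l * A i j * u j :=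
        Finset.sum_congr rfl fun i _ => Finset.sum_comm
      _ = ∑ k, ∑ i, ∑ j, ∑ l, A k l * S i k l * A i j * u j := Finset.sum_comm
      _ = ∑ k, ∑ j, ∑ i, ∑ l, A k l * S i k l * A i j * u j :=
        Finset.sum_congr rfl fun i _ => Finset.sum_comm
      _ = ∑ k, ∑ j, ∑ l, ∑ i, A k l * S i k l * A i j * u j :=
        Finset.sum_congr rfl fun i _ => Finset.sum_congr rfl fun j _ => Finset.sum_comm
      _ = _ := by
        refine Finset.sum_congr rfl fun k _ => Finset.sum_congr rfl fun j _ =>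
          Finset.sum_congr rfl fun l _ => Finset.sum_congr rfl fun i _ => ?_
        rw [hS i k l]
  have h2 : ∑ i, ∑ j, (∑ k, ∑ l, A i k * S i k l * A l j) * u j =
      ∑ i, ∑ j, A i j * ∑ k, ∑ l, A k l * u k * S i j l := by
    refine Finset.sum_congr rfl fun i _ => ?_
    simp only [Finset.sum_mul, Finset.mul_sum]
    rw [Finset.sum_comm]
    refine Finset.sum_congr rfl fun k _ => Finset.sum_congr rfl fun j _ =>
      Finset.sum_congr rfl fun l _ => ?_
    rw [hA l j]
    ring
  simp only [mul_add, add_mul, Finset.sum_add_distrib, neg_mul, neg_add, Finset.sum_neg_distrib]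
  rw [h1, h2]
  ring

theorem inner_gradV (w : En (n + 1)) :
    ⟪w, gradV Φ f x⟫ = ∑ k, ∑ l, (gmet Φ x)⁻¹ k l * pd k f x * ⟪w, pd l Φ x⟫ := by
  simp [gradV, inner_sum, inner_smul_right]

/-- The Laplace–Beltrami operator is the trace of the Hessian, whose entries are
`∂ᵢ∂ⱼf - ⟨∂ᵢ∂ⱼΦ, ∇f⟩`. -/
theorem lapl_eq_sum (hΦ : ContDiffAt ℝ (⊤ : ℕ∞) Φ x) (hf : ContDiffAt ℝ (⊤ : ℕ∞) f x)
    (hg : (gmet Φ x).PosDef) :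
    lapl Φ f x = ∑ i, ∑ j, (gmet Φ x)⁻¹ i j *
      (pd i (pd j f) x - ⟪pd i (pd j Φ) x, gradV Φ f x⟫) := by
  have hpd : ∀ i j, pd i (fun y => vElem Φ y * (gmet Φ y)⁻¹ i j * pd j f y) x =
      vElem Φ x * (((gmet Φ x)⁻¹ i j * pd i (pd j f) x) +
        ((∑ k, ∑ l, (gmet Φ x)⁻¹ k l * ⟪pd i (pd k Φ) x, pd l Φ x⟫) * (gmet Φ x)⁻¹ i j * pd j f x
        + (-∑ k, ∑ l, (gmet Φ x)⁻¹ i k *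
        (⟪pd i (pd l Φ) x, pd k Φ x⟫ + ⟪pd i (pd k Φ) x, pd l Φ x⟫) * (gmet Φ x)⁻¹ l j)
          * pd j f x)) := by
    intro i j
    have hv := differentiableAt_vElem hΦ hg
    have hi := differentiableAt_matrix_inv (differentiableAt_gmet hΦ) hg.det_pos.ne' i j
    rw [pd_mul (hv.fun_mul hi) (hf.pd j).differentiableAt_top, pd_mul hv hi, pd_vElem hΦ hg,
      pd_gmet_inv hΦ hg]
    ring
  unfold lapl
  simp only [hpd, ← Finset.mul_sum, inv_mul_cancel_left₀ (vElem_pos hg).ne']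
  simp only [Finset.sum_add_distrib (f := fun j => (gmet Φ x)⁻¹ _ j * pd _ (pd j f) x)]
  rw [Finset.sum_add_distrib, sum_christoffel_terms gmet_inv_symm
    (S := fun i k l => ⟪pd i (pd k Φ) x, pd l Φ x⟫) (fun i k l => by rw [pd_comm hΦ])]
  simp only [inner_gradV, mul_sub, Finset.sum_sub_distrib]
  ring

end InducedMetric

section Sphere

variable {n : ℕ} {U : Set (En n)} {Φ : En n → En (n + 1)} {f : En n → ℝ} {x : En n}

theorem inner_pd_of_norm_eq_one (hU : IsOpen U) (hΦ : ContDiffOn ℝ (⊤ : ℕ∞) Φ U)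
    (hsph : ∀ x ∈ U, ‖Φ x‖ = 1) (hx : x ∈ U) (i : Fin n) : ⟪Φ x, pd i Φ x⟫ = 0 := by
  have hd := (hΦ.contDiffAt (hU.mem_nhds hx)).differentiableAt_top
  have h := pd_inner hd hd i
  have hc : (fun y => ⟪Φ y, Φ y⟫) =ᶠ[nhds x] fun _ => (1 : ℝ) := by
    filter_upwards [hU.mem_nhds hx] with y hy
    rw [real_inner_self_eq_norm_sq, hsph y hy, one_pow]
  rw [pd_congr hc, real_inner_comm (Φ x)] at h
  simp [pd] at h ⊢
  linarith

theorem inner_pd_pd_of_norm_eq_one (hU : IsOpen U) (hΦ : ContDiffOn ℝ (⊤ : ℕ∞) Φ U)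
    (hsph : ∀ x ∈ U, ‖Φ x‖ = 1) (hx : x ∈ U) (i j : Fin n) :
    ⟪Φ x, pd i (pd j Φ) x⟫ = -gmet Φ x i j := by
  have hΦx := hΦ.contDiffAt (hU.mem_nhds hx)
  have h := pd_inner hΦx.differentiableAt_top (hΦx.pd j).differentiableAt_top i
  have hc : (fun y => ⟪Φ y, pd j Φ y⟫) =ᶠ[nhds x] fun _ => (0 : ℝ) := by
    filter_upwards [hU.mem_nhds hx] with y hy
    exact inner_pd_of_norm_eq_one hU hΦ hsph hy j
  have h0 : pd i (fun _ : En n => (0 : ℝ)) x = 0 := by simp [pd]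
  rw [pd_congr hc, h0] at h
  have hg : gmet Φ x i j = ⟪pd i Φ x, pd j Φ x⟫ := rfl
  linarith

/-- A unit vector and `n` independent vectors orthogonal to it span `ℝⁿ⁺¹`. -/
theorem eq_zero_of_inner_eq_zero {p q : En (n + 1)} {P : Fin n → En (n + 1)}
    (hP : (Matrix.gram ℝ P).PosDef) (hp : p ≠ 0) (hpP : ∀ i, ⟪p, P i⟫ = 0)
    (hqp : ⟪q, p⟫ = 0) (hqP : ∀ i, ⟪q, P i⟫ = 0) : q = 0 := by
  have hli : LinearIndependent ℝ (Fin.cons p P : Fin (n + 1) → En (n + 1)) := by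
    refine linearIndependent_finCons.mpr ⟨Matrix.linearIndependent_of_posDef_gram hP, fun h => hp ?_⟩
    have h' : Submodule.span ℝ (Set.range P) ≤ (ℝ ∙ p)ᗮ := by
      rw [Submodule.span_le]
      rintro _ ⟨i, rfl⟩
      exact Submodule.mem_orthogonal_singleton_iff_inner_right.mpr (hpP i)
    exact inner_self_eq_zero.mp (Submodule.mem_orthogonal_singleton_iff_inner_right.mp (h' h))
  have hspan := hli.span_eq_top_of_card_eq_finrank' (by simp)
  have hle : Submodule.span ℝ (Set.range (Fin.cons p P : Fin (n + 1) → En (n + 1))) ≤ (ℝ ∙ q)ᗮ := by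
    rw [Submodule.span_le]
    rintro _ ⟨i, rfl⟩
    refine Submodule.mem_orthogonal_singleton_iff_inner_right.mpr ?_
    refine Fin.cases hqp hqP i
  have hq : q ∈ (ℝ ∙ q)ᗮ := hle (hspan ▸ Submodule.mem_top)
  exact inner_self_eq_zero.mp (Submodule.mem_orthogonal_singleton_iff_inner_right.mp hq)

theorem gmet_mul_gradient (hg : (gmet Φ x).PosDef) (k : Fin n) :
    ∑ i, gmet Φ x k i * ∑ j, (gmet Φ x)⁻¹ i j * pd j f x = pd k f x := by
  have h : (gmet Φ x).mulVec ((gmet Φ x)⁻¹.mulVec fun j => pd j f x) = fun j => pd j f x := by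
    rw [Matrix.mulVec_mulVec, Matrix.mul_nonsing_inv _ (isUnit_iff_ne_zero.mpr hg.det_pos.ne'),
      Matrix.one_mulVec]
  exact congrFun h k

theorem inner_pd_gradV (hg : (gmet Φ x).PosDef) (k : Fin n) :
    ⟪pd k Φ x, gradV Φ f x⟫ = pd k f x := by
  rw [inner_gradV, Finset.sum_comm, ← gmet_mul_gradient hg k]
  refine Finset.sum_congr rfl fun i _ => ?_
  rw [Finset.mul_sum]
  refine Finset.sum_congr rfl fun j _ => ?_
  rw [gmet_inv_symm j i]
  simp only [gmet, Matrix.of_apply]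
  ring

theorem inner_gradV_pd (hg : (gmet Φ x).PosDef) (k : Fin n) :
    ⟪gradV Φ f x, pd k Φ x⟫ = pd k f x := by
  rw [real_inner_comm, inner_pd_gradV hg]

theorem inner_gradV_self (hg : (gmet Φ x).PosDef) :
    ⟪gradV Φ f x, gradV Φ f x⟫ = gradSq Φ f x := by
  rw [inner_gradV]
  simp only [inner_gradV_pd hg]
  rfl

/-- A vector whose products with the `∂ₖΦ` are those of a normal of a radial graph is a multiple
of `Φ - s∇f`. -/
theorem eq_smul_sub_gradV (hg : (gmet Φ x).PosDef) (h1 : ‖Φ x‖ = 1)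
    (hΦ : ∀ i, ⟪Φ x, pd i Φ x⟫ = 0) {q : En (n + 1)} {s : ℝ}
    (hq : ∀ k, ⟪q, pd k Φ x⟫ = -(⟪q, Φ x⟫ * s * pd k f x)) :
    q = ⟪q, Φ x⟫ • (Φ x - s • gradV Φ f x) := by
  have hΦΦ : ⟪Φ x, Φ x⟫ = (1 : ℝ) := by rw [real_inner_self_eq_norm_sq, h1, one_pow]
  have hΦV : ⟪Φ x, gradV Φ f x⟫ = 0 := by simp [inner_gradV, hΦ]
  rw [← sub_eq_zero]
  refine eq_zero_of_inner_eq_zero (p := Φ x) (P := fun i => pd i Φ x) hg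
    (by rw [← norm_ne_zero_iff, h1]; exact one_ne_zero) hΦ ?_ fun k => ?_
  · simp only [inner_sub_left, real_inner_smul_left, hΦΦ, real_inner_comm (Φ x) (gradV Φ f x), hΦV]
    ring
  · simp only [inner_sub_left, real_inner_smul_left, hΦ, hq, inner_gradV_pd hg]
    ring

end Sphere

section RadialGraph

variable {n : ℕ} {U : Set (En n)} {Φ : En n → En (n + 1)} {f : En n → ℝ} {φ : ℝ → ℝ} {x : En n}
  {t : ℝ}

theorem pd_radius (hf : ContDiffAt ℝ (⊤ : ℕ∞) f x) (i : Fin n) :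
    pd i (fun y => 1 + t * f y + φ t) x = t * pd i f x := by
  simp [pd, fderiv_const_mul hf.differentiableAt_top]

theorem ContDiffAt.radius (hf : ContDiffAt ℝ (⊤ : ℕ∞) f x) :
    ContDiffAt ℝ (⊤ : ℕ∞) (fun y => 1 + t * f y + φ t) x := by
  fun_prop

theorem pd_Xvar (hΦ : ContDiffAt ℝ (⊤ : ℕ∞) Φ x) (hf : ContDiffAt ℝ (⊤ : ℕ∞) f x) (i : Fin n) :
    pd i (Xvar f φ Φ t) x = (1 + t * f x + φ t) • pd i Φ x + (t * pd i f x) • Φ x := by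
  rw [← pd_radius hf]
  exact pd_smul hf.radius.differentiableAt_top hΦ.differentiableAt_top i

theorem pd_pd_Xvar (hU : IsOpen U) (hΦ : ContDiffOn ℝ (⊤ : ℕ∞) Φ U)
    (hf : ContDiffOn ℝ (⊤ : ℕ∞) f U) (hx : x ∈ U) (i j : Fin n) :
    pd j (pd i (Xvar f φ Φ t)) x =
      (1 + t * f x + φ t) • pd j (pd i Φ) x + (t * pd j f x) • pd i Φ x
        + ((t * pd i f x) • pd j Φ x + (t * pd j (pd i f) x) • Φ x) := by
  have hΦx := hΦ.contDiffAt (hU.mem_nhds hx)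
  have hfx := hf.contDiffAt (hU.mem_nhds hx)
  have hc : pd i (Xvar f φ Φ t) =ᶠ[nhds x]
      fun y => (1 + t * f y + φ t) • pd i Φ y + (t * pd i f y) • Φ y := by
    filter_upwards [hU.mem_nhds hx] with y hy
    exact pd_Xvar (hΦ.contDiffAt (hU.mem_nhds hy)) (hf.contDiffAt (hU.mem_nhds hy)) i
  have hr := (hfx.radius (φ := φ) (t := t)).differentiableAt_top
  have hi := (hΦx.pd i).differentiableAt_top
  have hfi := (hfx.pd i).differentiableAt_top.const_mul t
  rw [pd_congr hc, pd_add (hr.fun_smul hi) (hfi.fun_smul hΦx.differentiableAt_top), pd_smul hr hi,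
    pd_smul hfi hΦx.differentiableAt_top, pd_radius hfx,
    pd_const_mul (hfx.pd i).differentiableAt_top]

theorem gmet_Xvar (hΦ : ContDiffAt ℝ (⊤ : ℕ∞) Φ x) (hf : ContDiffAt ℝ (⊤ : ℕ∞) f x)
    (h1 : ‖Φ x‖ = 1) (hΦ0 : ∀ i, ⟪Φ x, pd i Φ x⟫ = 0) :
    gmet (Xvar f φ Φ t) x = (1 + t * f x + φ t) ^ 2 • gmet Φ x
      + t ^ 2 • Matrix.vecMulVec (fun i => pd i f x) fun i => pd i f x := by
  have hΦΦ : ⟪Φ x, Φ x⟫ = (1 : ℝ) := by rw [real_inner_self_eq_norm_sq, h1, one_pow]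
  ext i j
  simp only [gmet, Matrix.of_apply, pd_Xvar hΦ hf, Matrix.add_apply, Matrix.smul_apply,
    Matrix.vecMulVec_apply, inner_add_left, inner_add_right, real_inner_smul_left,
    real_inner_smul_right, hΦΦ, hΦ0, real_inner_comm (Φ x) (pd i Φ x), smul_eq_mul]
  ring

/-- The second fundamental form of a radial graph over the sphere. -/
theorem sff_Xvar (hU : IsOpen U) (hΦ : ContDiffOn ℝ (⊤ : ℕ∞) Φ U)
    (hf : ContDiffOn ℝ (⊤ : ℕ∞) f U) (hsph : ∀ x ∈ U, ‖Φ x‖ = 1) (hx : x ∈ U)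
    (hg : (gmet Φ x).PosDef) {ν : En n → En (n + 1)} (hν : DifferentiableAt ℝ ν x)
    (horth : ∀ y ∈ U, ∀ i, ⟪ν y, pd i (Xvar f φ Φ t) y⟫ = 0)
    (hr : 1 + t * f x + φ t ≠ 0)
    (hνx : ν x = ⟪ν x, Φ x⟫ • (Φ x - (t / (1 + t * f x + φ t)) • gradV Φ f x)) (i j : Fin n) :
    sff (Xvar f φ Φ t) ν x i j = ⟪ν x, Φ x⟫ * ((1 + t * f x + φ t) * gmet Φ x i j
      - t * (pd i (pd j f) x - ⟪pd i (pd j Φ) x, gradV Φ f x⟫)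
      + 2 * t ^ 2 / (1 + t * f x + φ t) * (pd i f x * pd j f x)) := by
  have hΦx := hΦ.contDiffAt (hU.mem_nhds hx)
  have hfx := hf.contDiffAt (hU.mem_nhds hx)
  have hXx : ContDiffAt ℝ (⊤ : ℕ∞) (Xvar f φ Φ t) x := hfx.radius.smul hΦx
  have h := pd_inner hν (hXx.pd i).differentiableAt_top j
  have hc : (fun y => ⟪ν y, pd i (Xvar f φ Φ t) y⟫) =ᶠ[nhds x] fun _ => (0 : ℝ) := by
    filter_upwards [hU.mem_nhds hx] with y hy using horth y hy i
  have h0 : pd j (fun _ : En n => (0 : ℝ)) x = 0 := by simp [pd]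
  rw [pd_congr hc, h0, pd_pd_Xvar hU hΦ hf hx, pd_comm hΦx, pd_comm hfx] at h
  have hΦΦ : ⟪Φ x, Φ x⟫ = (1 : ℝ) := by rw [real_inner_self_eq_norm_sq, hsph x hx, one_pow]
  have hΦ0 := inner_pd_of_norm_eq_one hU hΦ hsph hx
  have hΦV : ⟪gradV Φ f x, Φ x⟫ = 0 := by rw [real_inner_comm, inner_gradV]; simp [hΦ0]
  have hs : sff (Xvar f φ Φ t) ν x i j = ⟪pd j ν x, pd i (Xvar f φ Φ t) x⟫ := by
    simp only [sff, Matrix.of_apply]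
    exact real_inner_comm _ _
  rw [hs, ← sub_eq_zero]
  have h' : ⟪pd j ν x, pd i (Xvar f φ Φ t) x⟫ = -⟪ν x, (1 + t * f x + φ t) • pd i (pd j Φ) x
      + (t * pd j f x) • pd i Φ x + ((t * pd i f x) • pd j Φ x + (t * pd i (pd j f) x) • Φ x)⟫ := by
    linarith
  rw [h']
  generalize ha : ⟪ν x, Φ x⟫ = a at hνx ⊢
  rw [hνx]
  simp only [inner_sub_left, inner_add_right, real_inner_smul_left,
    real_inner_smul_right, hΦΦ, hΦ0, hΦV, inner_gradV_pd hg, inner_pd_pd_of_norm_eq_one hU hΦ hsph hx]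
  rw [real_inner_comm (gradV Φ f x) (pd i (pd j Φ) x)]
  field_simp
  ring

end RadialGraph

section MeanCurvature

variable {n : ℕ}

/-- The Hessian of `f` evaluated on its gradient, `∇²f(∇f, ∇f)`. -/
def hessGrad (Φ : En n → En (n + 1)) (f : En n → ℝ) (x : En n) : ℝ :=
  ∑ i, ∑ j, (gmet Φ x)⁻¹.mulVec (fun k => pd k f x) i * (gmet Φ x)⁻¹.mulVec (fun k => pd k f x) j *
    (pd i (pd j f) x - ⟪pd i (pd j Φ) x, gradV Φ f x⟫)

theorem sum_sum_mul_add (A B g E F : Fin n → Fin n → ℝ) (c₁ c₂ c₃ c₄ c₅ c₆ : ℝ) :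
    ∑ i, ∑ j, c₁ * (A i j - c₂ * B i j) * (c₃ * (c₄ * g i j - c₅ * E i j + c₆ * F i j)) =
      c₁ * c₃ * (c₄ * (∑ i, ∑ j, A i j * g i j) - c₅ * (∑ i, ∑ j, A i j * E i j)
        + c₆ * (∑ i, ∑ j, A i j * F i j)
        - c₂ * (c₄ * (∑ i, ∑ j, B i j * g i j) - c₅ * (∑ i, ∑ j, B i j * E i j)
          + c₆ * (∑ i, ∑ j, B i j * F i j))) := by
  simp only [Finset.mul_sum, ← Finset.sum_add_distrib, ← Finset.sum_sub_distrib]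
  refine Finset.sum_congr rfl fun i _ => Finset.sum_congr rfl fun j _ => ?_
  ring

/-- The Sherman–Morrison formula for a symmetric rank one perturbation. -/
theorem inv_smul_add_vecMulVec {g : Matrix (Fin n) (Fin n) ℝ} (hg : g.det ≠ 0)
    (hsymm : g.transpose = g) {r t G : ℝ} {u v : Fin n → ℝ} (hv : g⁻¹.mulVec u = v)
    (hG : u ⬝ᵥ v = G) (hr : r ≠ 0) (hw : r ^ 2 + t ^ 2 * G ≠ 0) :
    (r ^ 2 • g + t ^ 2 • Matrix.vecMulVec u u)⁻¹ =
      (r ^ 2)⁻¹ • (g⁻¹ - (t ^ 2 / (r ^ 2 + t ^ 2 * G)) • Matrix.vecMulVec v v) := by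
  have hu : g.mulVec v = u := by
    rw [← hv, Matrix.mulVec_mulVec, Matrix.mul_nonsing_inv _ (isUnit_iff_ne_zero.mpr hg),
      Matrix.one_mulVec]
  have hu' : Matrix.vecMul u g⁻¹ = v := by
    rw [← hv, ← Matrix.mulVec_transpose, Matrix.transpose_nonsing_inv, hsymm]
  refine Matrix.inv_eq_right_inv ?_
  rw [Matrix.mul_smul, Matrix.add_mul, Matrix.mul_sub, Matrix.mul_sub]
  simp only [Matrix.smul_mul, Matrix.mul_smul, Matrix.mul_vecMulVec, Matrix.vecMulVec_mul,
    Matrix.smul_mulVec, Matrix.mul_nonsing_inv _ (isUnit_iff_ne_zero.mpr hg), hu, hu']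
  have huv : (Matrix.vecMulVec u u).mulVec v = G • u := by
    ext i
    simp only [Matrix.vecMulVec_mulVec, hG, Pi.smul_apply, MulOpposite.smul_eq_mul_unop,
      MulOpposite.unop_op, smul_eq_mul, mul_comm]
  rw [huv]
  ext i j
  simp only [Matrix.smul_apply, Matrix.add_apply, Matrix.sub_apply, Matrix.vecMulVec_apply,
    Pi.smul_apply, smul_eq_mul]
  field_simp
  ring

variable {U : Set (En n)} {Φ : En n → En (n + 1)} {f : En n → ℝ} {φ : ℝ → ℝ} {x : En n}
  {t : ℝ}


theorem normal_Xvar (hU : IsOpen U) (hΦ : ContDiffOn ℝ (⊤ : ℕ∞) Φ U)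
    (hf : ContDiffOn ℝ (⊤ : ℕ∞) f U) (hsph : ∀ x ∈ U, ‖Φ x‖ = 1) (hx : x ∈ U)
    (hg : (gmet Φ x).PosDef) {q : En (n + 1)} (horth : ∀ i, ⟪q, pd i (Xvar f φ Φ t) x⟫ = 0)
    (hr : 1 + t * f x + φ t ≠ 0) :
    q = ⟪q, Φ x⟫ • (Φ x - (t / (1 + t * f x + φ t)) • gradV Φ f x) := by
  refine eq_smul_sub_gradV hg (hsph x hx) (inner_pd_of_norm_eq_one hU hΦ hsph hx) fun k => ?_
  have h := horth k
  rw [pd_Xvar (hΦ.contDiffAt (hU.mem_nhds hx)) (hf.contDiffAt (hU.mem_nhds hx)), inner_add_right,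
    real_inner_smul_right, real_inner_smul_right] at h
  field_simp
  linarith

theorem sq_inner_normal_Xvar (hU : IsOpen U) (hΦ : ContDiffOn ℝ (⊤ : ℕ∞) Φ U)
    (hf : ContDiffOn ℝ (⊤ : ℕ∞) f U) (hsph : ∀ x ∈ U, ‖Φ x‖ = 1) (hx : x ∈ U)
    (hg : (gmet Φ x).PosDef) {q : En (n + 1)} (horth : ∀ i, ⟪q, pd i (Xvar f φ Φ t) x⟫ = 0)
    (hr : 1 + t * f x + φ t ≠ 0) (hq : ‖q‖ = 1) :
    ⟪q, Φ x⟫ ^ 2 * ((1 + t * f x + φ t) ^ 2 + t ^ 2 * gradSq Φ f x) =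
      (1 + t * f x + φ t) ^ 2 := by
  have hqq : ⟪q, q⟫ = (1 : ℝ) := by rw [real_inner_self_eq_norm_sq, hq, one_pow]
  have hΦΦ : ⟪Φ x, Φ x⟫ = (1 : ℝ) := by rw [real_inner_self_eq_norm_sq, hsph x hx, one_pow]
  have hΦV : ⟪Φ x, gradV Φ f x⟫ = 0 := by
    simp [inner_gradV, inner_pd_of_norm_eq_one hU hΦ hsph hx]
  have hVΦ : ⟪gradV Φ f x, Φ x⟫ = 0 := by rw [real_inner_comm, hΦV]
  have h := normal_Xvar hU hΦ hf hsph hx hg horth hr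
  generalize ⟪q, Φ x⟫ = a at h ⊢
  rw [h] at hqq
  simp only [inner_sub_left, inner_sub_right, real_inner_smul_left, real_inner_smul_right, hΦΦ,
    hΦV, hVΦ, inner_gradV_self hg] at hqq
  field_simp at hqq
  linarith

/-- The mean curvature of a radial graph over the sphere. -/
theorem Hmean_Xvar (hU : IsOpen U) (hΦ : ContDiffOn ℝ (⊤ : ℕ∞) Φ U)
    (hf : ContDiffOn ℝ (⊤ : ℕ∞) f U) (hsph : ∀ x ∈ U, ‖Φ x‖ = 1) (hx : x ∈ U)
    (hg : (gmet Φ x).PosDef) {ν : En n → En (n + 1)} (hν : DifferentiableAt ℝ ν x)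
    (horth : ∀ y ∈ U, ∀ i, ⟪ν y, pd i (Xvar f φ Φ t) y⟫ = 0) {r : ℝ}
    (hrt : 1 + t * f x + φ t = r) (hr : r ≠ 0) (hw : r ^ 2 + t ^ 2 * gradSq Φ f x ≠ 0) :
    Hmean (Xvar f φ Φ t) ν x = 1 / n * ((r ^ 2)⁻¹ * ⟪ν x, Φ x⟫ *
      (r * n - t * lapl Φ f x + 2 * t ^ 2 / r * gradSq Φ f x
        - t ^ 2 / (r ^ 2 + t ^ 2 * gradSq Φ f x) *
          (r * gradSq Φ f x - t * hessGrad Φ f x + 2 * t ^ 2 / r * gradSq Φ f x ^ 2))) := by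
  subst hrt
  have hΦx := hΦ.contDiffAt (hU.mem_nhds hx)
  have hfx := hf.contDiffAt (hU.mem_nhds hx)
  have hdet : (gmet Φ x).det ≠ 0 := hg.det_pos.ne'
  have hsymm : (gmet Φ x).transpose = gmet Φ x := by
    ext i j
    simp [gmet, real_inner_comm]
  set u : Fin n → ℝ := fun i => pd i f x with hu
  set v : Fin n → ℝ := (gmet Φ x)⁻¹.mulVec u with hv
  have hgv : (gmet Φ x).mulVec v = u := funext fun k => gmet_mul_gradient hg k
  have hG : u ⬝ᵥ v = gradSq Φ f x := by
    simp only [dotProduct, hv, Matrix.mulVec, gradSq, Finset.mul_sum]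
    refine Finset.sum_congr rfl fun i _ => Finset.sum_congr rfl fun j _ => ?_
    ring
  have hAg : ∑ i, ∑ j, (gmet Φ x)⁻¹ i j * gmet Φ x i j = n := by
    have h : ∀ i, ∑ j, (gmet Φ x)⁻¹ i j * gmet Φ x i j =
        ((gmet Φ x)⁻¹ * (gmet Φ x).transpose) i i := fun i => rfl
    simp [h, hsymm, Matrix.nonsing_inv_mul _ (isUnit_iff_ne_zero.mpr hdet)]
  have hAu : ∑ i, ∑ j, (gmet Φ x)⁻¹ i j * (u i * u j) = gradSq Φ f x := by
    simp only [gradSq, mul_assoc, hu]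
  have hvg : ∑ i, ∑ j, Matrix.vecMulVec v v i j * gmet Φ x i j = gradSq Φ f x := by
    rw [← hG, ← hgv]
    simp only [dotProduct, Matrix.mulVec, Finset.sum_mul, Matrix.vecMulVec_apply]
    refine Finset.sum_congr rfl fun i _ => Finset.sum_congr rfl fun j _ => ?_
    ring
  have hvu : ∑ i, ∑ j, Matrix.vecMulVec v v i j * (u i * u j) = gradSq Φ f x ^ 2 := by
    rw [← hG, sq, dotProduct, Finset.sum_mul_sum]
    simp only [Matrix.vecMulVec_apply]
    refine Finset.sum_congr rfl fun i _ => Finset.sum_congr rfl fun j _ => ?_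
    ring
  have hνx := normal_Xvar hU hΦ hf hsph hx hg (horth x hx) hr
  unfold Hmean
  congr 1
  rw [gmet_Xvar hΦx hfx (hsph x hx) (inner_pd_of_norm_eq_one hU hΦ hsph hx),
    inv_smul_add_vecMulVec hdet hsymm rfl hG hr hw]
  simp only [sff_Xvar hU hΦ hf hsph hx hg hν horth hr hνx, Matrix.smul_apply, Matrix.sub_apply,
    smul_eq_mul]
  rw [sum_sum_mul_add (fun i j => (gmet Φ x)⁻¹ i j) (fun i j => Matrix.vecMulVec v v i j)
    (fun i j => gmet Φ x i j) (fun i j => pd i (pd j f) x - ⟪pd i (pd j Φ) x, gradV Φ f x⟫)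
    (fun i j => u i * u j), hAg, hAu, hvg, hvu, ← lapl_eq_sum hΦx hfx hg]
  rfl

end MeanCurvature

section SecondDerivative

variable {u v : ℝ → ℝ} {t : ℝ}

theorem ContDiffAt.eventually_differentiableAt_two (hu : ContDiffAt ℝ 2 u t) :
    ∀ᶠ s in nhds t, DifferentiableAt ℝ u s := by
  filter_upwards [hu.eventually (by simp)] with s hs using hs.differentiableAt (by simp)

theorem ContDiffAt.differentiableAt_deriv_two (hu : ContDiffAt ℝ 2 u t) :
    DifferentiableAt ℝ (deriv u) t :=
  ((hu.fderiv_right (m := 1) one_add_one_eq_two.le).differentiableAt (by simp)).clm_apply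
    (differentiableAt_const 1)

theorem deriv_deriv_add (hu : ContDiffAt ℝ 2 u t) (hv : ContDiffAt ℝ 2 v t) :
    deriv (deriv fun s => u s + v s) t = deriv (deriv u) t + deriv (deriv v) t := by
  have h : deriv (fun s => u s + v s) =ᶠ[nhds t] fun s => deriv u s + deriv v s := by
    filter_upwards [hu.eventually_differentiableAt_two, hv.eventually_differentiableAt_two]
      with s h1 h2 using deriv_fun_add h1 h2
  rw [h.deriv_eq, deriv_fun_add hu.differentiableAt_deriv_two hv.differentiableAt_deriv_two]

theorem deriv_deriv_mul (hu : ContDiffAt ℝ 2 u t) (hv : ContDiffAt ℝ 2 v t) :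
    deriv (deriv fun s => u s * v s) t =
      deriv (deriv u) t * v t + 2 * (deriv u t * deriv v t) + u t * deriv (deriv v) t := by
  have h : deriv (fun s => u s * v s) =ᶠ[nhds t] fun s => deriv u s * v s + u s * deriv v s := by
    filter_upwards [hu.eventually_differentiableAt_two, hv.eventually_differentiableAt_two]
      with s h1 h2 using deriv_fun_mul h1 h2
  have hu1 := hu.differentiableAt (by simp : (2 : WithTop ℕ∞) ≠ 0)
  have hv1 := hv.differentiableAt (by simp : (2 : WithTop ℕ∞) ≠ 0)
  have hu2 := hu.differentiableAt_deriv_two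
  have hv2 := hv.differentiableAt_deriv_two
  rw [h.deriv_eq, deriv_fun_add (hu2.fun_mul hv1) (hu1.fun_mul hv2), deriv_fun_mul hu2 hv1,
    deriv_fun_mul hu1 hv2]
  ring

theorem deriv_inv_of_eq_one (hu : ContDiffAt ℝ 2 u t) (h1 : u t = 1) :
    deriv (fun s => (u s)⁻¹) t = -deriv u t := by
  rw [deriv_fun_inv'' (hu.differentiableAt (by simp)) (by simp [h1]), h1]
  simp

theorem deriv_deriv_inv_of_eq_one (hu : ContDiffAt ℝ 2 u t) (h1 : u t = 1) :
    deriv (deriv fun s => (u s)⁻¹) t = 2 * deriv u t ^ 2 - deriv (deriv u) t := by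
  have h0 : u t ≠ 0 := by simp [h1]
  have h := deriv_deriv_mul hu (v := fun s => (u s)⁻¹) (hu.inv h0)
  have hc : (fun s => u s * (u s)⁻¹) =ᶠ[nhds t] fun _ => (1 : ℝ) := by
    filter_upwards [hu.continuousAt.eventually_ne h0] with s hs using mul_inv_cancel₀ hs
  rw [hc.deriv.deriv_eq, deriv_inv_of_eq_one hu h1, h1] at h
  simp at h
  linarith

/-- The second order expansion of the mean curvature of a radial graph over the sphere. -/
theorem deriv_deriv_radial {r a : ℝ → ℝ} (hr : ContDiffAt ℝ 2 r 0) (ha : ContDiffAt ℝ 2 a 0)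
    (hr0 : r 0 = 1) (ha0 : a 0 = 1) (n L G K : ℝ)
    (har : ∀ᶠ t in nhds 0, a t ^ 2 * (r t ^ 2 + t ^ 2 * G) = r t ^ 2) :
    deriv (deriv fun t => (r t ^ 2)⁻¹ * a t * (r t * n - t * L + 2 * t ^ 2 / r t * G
        - t ^ 2 / (r t ^ 2 + t ^ 2 * G) * (r t * G - t * K + 2 * t ^ 2 / r t * G ^ 2))) 0 =
      n * (2 * deriv r 0 ^ 2 - deriv (deriv r) 0) + 4 * deriv r 0 * L + (2 - n) * G := by
  set w : ℝ → ℝ := fun t => r t ^ 2 + t ^ 2 * G with hw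
  set b : ℝ → ℝ := fun t => a t + 1 with hb
  have hid : ContDiffAt ℝ 2 (fun t : ℝ => t) 0 := contDiffAt_id
  have hcw : ContDiffAt ℝ 2 w 0 := by fun_prop
  have hcb : ContDiffAt ℝ 2 b 0 := by fun_prop
  have hw0 : w 0 = 1 := by simp [hw, hr0]
  have hb0 : b 0 = 2 := by simp [hb, ha0]; norm_num
  set s : ℝ → ℝ := fun t => (r t)⁻¹ with hs
  set wi : ℝ → ℝ := fun t => (w t)⁻¹ with hwi
  set bi : ℝ → ℝ := fun t => (b t)⁻¹ with hbi
  have hcs : ContDiffAt ℝ 2 s 0 := hr.inv (by simp [hr0])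
  have hcwi : ContDiffAt ℝ 2 wi 0 := hcw.inv (by simp [hw0])
  have hcbi : ContDiffAt ℝ 2 bi 0 := hcb.inv (by simp [hb0])
  set B : ℝ → ℝ := fun t => -(G * wi t * bi t) * (n * s t - L * t * s t ^ 2)
    + a t * s t ^ 2 * (2 * G * s t - wi t * (r t * G - t * K + 2 * t ^ 2 * s t * G ^ 2)) with hB
  have hcB : ContDiffAt ℝ 2 B 0 := by fun_prop
  have heq : (fun t => (r t ^ 2)⁻¹ * a t * (r t * n - t * L + 2 * t ^ 2 / r t * G
      - t ^ 2 / w t * (r t * G - t * K + 2 * t ^ 2 / r t * G ^ 2))) =ᶠ[nhds 0]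
      fun t => (n * s t + -L * (t * (s t * s t))) + t * t * B t := by
    filter_upwards [har, hr.continuousAt.eventually_ne (by simp [hr0] : r 0 ≠ 0),
      hcw.continuousAt.eventually_ne (by simp [hw0] : w 0 ≠ 0),
      hcb.continuousAt.eventually_ne (by simp [hb0] : b 0 ≠ 0)] with t h1 h2 h3 h4
    have ha1 : a t = 1 - t ^ 2 * (G * wi t * bi t) := by
      simp only [hwi, hbi]
      field_simp
      have h5 : w t = r t ^ 2 + t ^ 2 * G := rfl
      have h6 : b t = a t + 1 := rfl
      rw [h6]
      rw [← h5] at h1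
      linear_combination h1 - h5
    have hfac : (r t ^ 2)⁻¹ * a t * (r t * n - t * L + 2 * t ^ 2 / r t * G
        - t ^ 2 / w t * (r t * G - t * K + 2 * t ^ 2 / r t * G ^ 2)) =
        a t * (n * s t - L * t * s t ^ 2) + t ^ 2 * (a t * s t ^ 2 *
          (2 * G * s t - wi t * (r t * G - t * K + 2 * t ^ 2 * s t * G ^ 2))) := by
      simp only [hs, hwi]
      field_simp
      ring
    rw [hfac]
    simp only [hB]
    linear_combination (n * s t - L * t * s t ^ 2) * ha1
  have hs0 : s 0 = 1 := by simp [hs, hr0]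
  have hB0 : B 0 = G - n * G / 2 := by
    simp only [hB, hwi, hbi, hw0, hb0, hs0, ha0, hr0]
    ring
  have hds : deriv s 0 = -deriv r 0 := deriv_inv_of_eq_one hr hr0
  have hdds := deriv_deriv_inv_of_eq_one hr hr0
  have hd1 : deriv (fun t : ℝ => t) = fun _ => 1 := by ext; simp
  have hss : deriv (fun t => s t * s t) 0 = -2 * deriv r 0 := by
    have hd := hcs.differentiableAt (by simp)
    rw [deriv_fun_mul hd hd, hds, hs0]
    ring
  have htt : deriv (deriv fun t : ℝ => t * t) 0 = 2 := by
    rw [deriv_deriv_mul hid hid, hd1]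
    simp
  have htt1 : deriv (fun t : ℝ => t * t) 0 = 0 := by
    rw [deriv_fun_mul differentiableAt_id differentiableAt_id]
    simp
  rw [heq.deriv.deriv_eq, deriv_deriv_add (by fun_prop) (by fun_prop),
    deriv_deriv_add (by fun_prop) (by fun_prop),
    deriv_deriv_mul contDiffAt_const hcs, deriv_deriv_mul contDiffAt_const (by fun_prop),
    deriv_deriv_mul hid (by fun_prop), deriv_deriv_mul (u := fun t : ℝ => t * t) (by fun_prop) hcB,
    htt, htt1, hss, hB0, hdds, hd1]
  simp
  ring

end SecondDerivative

/-- `∂²H/∂t² |_(t=0)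
= ((2−n)/n) |∇f|² + 2 (f + φ'(0))² − φ''(0) + (4/n)(f + φ'(0)) Δf`. -/
theorem second_variation_mean_curvature {n : ℕ} (hn : 1 ≤ n) (U : Set (En n)) (hU : IsOpen U)
    (Φ : En n → En (n + 1)) (f : En n → ℝ) (φ : ℝ → ℝ) (ε : ℝ) (hε : 0 < ε)
    (hΦ : ContDiffOn ℝ (⊤ : ℕ∞) Φ U) (hf : ContDiffOn ℝ (⊤ : ℕ∞) f U)
    (hφ : ContDiffOn ℝ (⊤ : ℕ∞) φ (Ioo (-ε) ε)) (hφ0 : φ 0 = 0)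
    (hsph : ∀ x ∈ U, ‖Φ x‖ = 1)
    (himm : ∀ x ∈ U, (gmet Φ x).PosDef)
    (N : ℝ → En n → En (n + 1))
    (hNsm : ContDiffOn ℝ (⊤ : ℕ∞) (fun p : ℝ × En n => N p.1 p.2) (Ioo (-ε) ε ×ˢ U))
    (hNunit : ∀ t ∈ Ioo (-ε) ε, ∀ x ∈ U, ‖N t x‖ = 1)
    (hNorth : ∀ t ∈ Ioo (-ε) ε, ∀ x ∈ U, ∀ i : Fin n, ⟪N t x, pd i (Xvar f φ Φ t) x⟫ = 0)
    (hN0 : ∀ x ∈ U, N 0 x = Φ x) :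
    ∀ x ∈ U,
      deriv (deriv (fun t => Hmean (Xvar f φ Φ t) (N t) x)) 0
        = ((2 - (n : ℝ)) / n) * gradSq Φ f x + 2 * (f x + deriv φ 0) ^ 2
          - deriv (deriv φ) 0 + (4 / (n : ℝ)) * (f x + deriv φ 0) * lapl Φ f x := by
  intro x hx
  have hΦx := hΦ.contDiffAt (hU.mem_nhds hx)
  have hI : Ioo (-ε) ε ∈ nhds (0 : ℝ) := Ioo_mem_nhds (by linarith) hε
  have h2 : (2 : WithTop ℕ∞) ≤ ((⊤ : ℕ∞) : WithTop ℕ∞) :=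
    WithTop.coe_le_coe.mpr (le_top : (2 : ℕ∞) ≤ ⊤)
  have hφ2 : ContDiffAt ℝ 2 φ 0 := (hφ.contDiffAt hI).of_le h2
  have hNt : ∀ t ∈ Ioo (-ε) ε, ContDiffAt ℝ (⊤ : ℕ∞) (fun p : ℝ × En n => N p.1 p.2) (t, x) :=
    fun t ht => hNsm.contDiffAt ((isOpen_Ioo.prod hU).mem_nhds ⟨ht, hx⟩)
  have hNx : ∀ t ∈ Ioo (-ε) ε, DifferentiableAt ℝ (N t) x := fun t ht =>
    ((hNt t ht).comp x (contDiffAt_const.prodMk contDiffAt_id)).differentiableAt_top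
  set r : ℝ → ℝ := fun t => 1 + t * f x + φ t with hr
  set a : ℝ → ℝ := fun t => ⟪N t x, Φ x⟫ with ha
  have hr2 : ContDiffAt ℝ 2 r 0 := by fun_prop
  have ha2 : ContDiffAt ℝ 2 a 0 := by
    have h : ContDiffAt ℝ (⊤ : ℕ∞) (fun t => N t x) 0 :=
      (hNt 0 (mem_of_mem_nhds hI)).comp (0 : ℝ) (contDiffAt_id.prodMk contDiffAt_const)
    exact (h.of_le h2).inner ℝ contDiffAt_const
  have hr0 : r 0 = 1 := by simp [hr, hφ0]
  have ha0 : a 0 = 1 := by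
    simp only [ha]
    rw [hN0 x hx, real_inner_self_eq_norm_sq, hsph x hx, one_pow]
  have hrne : ∀ᶠ t in nhds 0, r t ≠ 0 := hr2.continuousAt.eventually_ne (by simp [hr0])
  have hwne : ∀ᶠ t in nhds 0, r t ^ 2 + t ^ 2 * gradSq Φ f x ≠ 0 := by
    have hc : ContinuousAt (fun t => r t ^ 2 + t ^ 2 * gradSq Φ f x) 0 :=
      (hr2.continuousAt.pow 2).add (by fun_prop)
    exact hc.eventually_ne (by simp [hr0])
  have har : ∀ᶠ t in nhds 0, a t ^ 2 * (r t ^ 2 + t ^ 2 * gradSq Φ f x) = r t ^ 2 := by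
    filter_upwards [hI, hrne] with t ht hrt
    exact sq_inner_normal_Xvar hU hΦ hf hsph hx (himm x hx) (hNorth t ht x hx) hrt
      (hNunit t ht x hx)
  have hH : (fun t => Hmean (Xvar f φ Φ t) (N t) x) =ᶠ[nhds 0] fun t => 1 / (n : ℝ) *
      ((r t ^ 2)⁻¹ * a t * (r t * n - t * lapl Φ f x + 2 * t ^ 2 / r t * gradSq Φ f x
        - t ^ 2 / (r t ^ 2 + t ^ 2 * gradSq Φ f x) * (r t * gradSq Φ f x - t * hessGrad Φ f x
          + 2 * t ^ 2 / r t * gradSq Φ f x ^ 2))) := by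
    filter_upwards [hI, hrne, hwne] with t ht hrt hwt
    exact Hmean_Xvar hU hΦ hf hsph hx (himm x hx) (hNx t ht) (hNorth t ht) rfl hrt hwt
  have hdr : deriv r =ᶠ[nhds 0] fun t => f x + deriv φ t := by
    filter_upwards [hφ2.eventually_differentiableAt_two] with t ht
    have h : HasDerivAt r (1 * f x + deriv φ t) t :=
      (((hasDerivAt_id t).mul_const (f x)).const_add 1).add ht.hasDerivAt
    rw [h.deriv, one_mul]
  have hddr : deriv (deriv r) 0 = deriv (deriv φ) 0 := by
    rw [hdr.deriv_eq, deriv_const_add]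
  rw [hH.deriv.deriv_eq]
  simp only [deriv_const_mul_field', deriv_const_mul_field]
  rw [deriv_deriv_radial hr2 ha2 hr0 ha0 _ _ _ _ har, hdr.eq_of_nhds, hddr]
  have hn0 : (n : ℝ) ≠ 0 := by positivity
  field_simp
  ring
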